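/- (Power means) Let A₁, …, Aₙ be m×m positive definite complex matrices, let w = (w₁, …, wₙ) be a weight (wᵢ > 0, Σᵢ wᵢ = 1), and let t ∈ (0,1]. Then the equation X = Σᵢ wᵢ (X #_t Aᵢ) has a unique positive definite solution X (the t-weighted power mean P_t(w; A₁, …, Aₙ)). -/

import Mathlib

/-!
The map `f X = ∑ wᵢ (X #_t Aᵢ)` is a contraction for Thompson's metric on positive definite
matrices. Indeed `X #_t A = A #_{1-t} X` (`gm_symm`), and since `1 - t ∈ [0, 1)` the
Löwner–Heinz inequality makes `X ↦ A #_{1-t} X` monotone; it is also homogeneous of degree `1 - t`.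
Hence `X ≤ c Y` implies `f X ≤ c^(1-t) f Y`, and iterating gives `f^k X ≤ c^((1-t)^k) f^k Y`, where
the scalar tends to `1`. Applied to two fixed points this gives uniqueness (`le_of_fixed`). For
existence (`exists_fixed`), `f` preserves some order interval `[k⁻¹ 1, k 1]`; the images of its
endpoints under the iterates of `f` bound nested compact intervals that shrink to a fixed point.

The argument is carried out in a unital C⋆-algebra with compact order intervals and transferred to
matrices through `wgmean_eq_gm`.
-/

open Matrix
open scoped ComplexOrder

noncomputable def matFun {m : ℕ} (f : ℝ → ℝ) (A : Matrix (Fin m) (Fin m) ℂ) :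
    Matrix (Fin m) (Fin m) ℂ :=
  if hA : A.IsHermitian then
    (hA.eigenvectorUnitary : Matrix (Fin m) (Fin m) ℂ) *
      Matrix.diagonal (fun i => (f (hA.eigenvalues i) : ℂ)) *
      (star (hA.eigenvectorUnitary : Matrix (Fin m) (Fin m) ℂ))
  else 0

/-- The unique positive definite square root of a positive definite matrix
(realized via the spectral decomposition). -/
noncomputable def msqrt {m : ℕ} (A : Matrix (Fin m) (Fin m) ℂ) : Matrix (Fin m) (Fin m) ℂ :=
  matFun Real.sqrt A

/-- The logarithm of a positive definite matrix: the unique Hermitian `L` with `exp L = A`. -/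
noncomputable def mlog {m : ℕ} (A : Matrix (Fin m) (Fin m) ℂ) : Matrix (Fin m) (Fin m) ℂ :=
  matFun Real.log A

/-- The real power `A ^ t` of a positive definite matrix, via the spectral decomposition. -/
noncomputable def mpow {m : ℕ} (A : Matrix (Fin m) (Fin m) ℂ) (t : ℝ) : Matrix (Fin m) (Fin m) ℂ :=
  matFun (fun x => x ^ t) A

/-- The matrix geometric mean `A # B`. -/
noncomputable def gmean {m : ℕ} (A B : Matrix (Fin m) (Fin m) ℂ) : Matrix (Fin m) (Fin m) ℂ :=
  msqrt A * msqrt ((msqrt A)⁻¹ * B * (msqrt A)⁻¹) * msqrt A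

/-- The weighted geometric mean `A #_t B`. -/
noncomputable def wgmean {m : ℕ} (A B : Matrix (Fin m) (Fin m) ℂ) (t : ℝ) :
    Matrix (Fin m) (Fin m) ℂ :=
  msqrt A * mpow ((msqrt A)⁻¹ * B * (msqrt A)⁻¹) t * msqrt A

/-- The Frobenius (Hilbert–Schmidt) norm `‖X‖₂ = (Tr(X*X))^{1/2}`. -/
noncomputable def fnorm {m : ℕ} (X : Matrix (Fin m) (Fin m) ℂ) : ℝ :=
  Real.sqrt ((Xᴴ * X).trace.re)

/-- The Riemannian metric `δ(A,B) = ‖log(A^{-1/2} B A^{-1/2})‖₂`. -/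
noncomputable def rdist {m : ℕ} (A B : Matrix (Fin m) (Fin m) ℂ) : ℝ :=
  fnorm (mlog ((msqrt A)⁻¹ * B * (msqrt A)⁻¹))

/-- The Loewner order: `A ≤ B` iff `B - A` is positive semidefinite. -/
def Loewner {m : ℕ} (A B : Matrix (Fin m) (Fin m) ℂ) : Prop :=
  (B - A).PosSemidef

/-! ### Weighted geometric means in a C⋆-algebra -/

section CStar
variable {B : Type*} [CStarAlgebra B] [PartialOrder B] [StarOrderedRing B]

lemma unitary_conj_rpow (u : unitary B) {a : B} (ha : IsStrictlyPositive a) (s : ℝ) :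
    ((u : B) * a * star (u : B)) ^ s = (u : B) * a ^ s * star (u : B) := by
  have h0 : 0 ≤ (u : B) * a * star (u : B) := star_right_conjugate_nonneg ha.nonneg _
  rw [CFC.rpow_eq_cfc_real h0, CFC.rpow_eq_cfc_real ha.nonneg]
  have := StarAlgHomClass.map_cfc (S := ℝ) (Unitary.conjStarAlgAut ℝ B u) (fun x : ℝ => x ^ s) a
    (hf := by
      refine ContinuousOn.rpow_const continuousOn_id fun x hx => Or.inl ?_
      rintro rfl
      exact spectrum.zero_notMem ℝ ha.isUnit hx)
    (hφ := by
      change Continuous fun x => (u : B) * x * star (u : B)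
      fun_prop)
    (ha := ha.nonneg.isSelfAdjoint) (hφa := by
      simpa using h0.isSelfAdjoint)
  simpa using this.symm

/-- Writing `m = u h` with `h = (m⋆ m)^(1/2)` and `u` unitary, the middle factor `(m m⋆)⁻¹` is
`u (m⋆ m)⁻¹ u⋆`, so that the powers of `m⋆ m` combine. -/
lemma conj_rpow_one_sub (m : Bˣ) (t : ℝ) :
    star (m : B) * (((star m)⁻¹ * m⁻¹ : Bˣ) : B) ^ (1 - t) * m = (star (m : B) * m) ^ t := by
  set p : Bˣ := star m * m with hp
  have hp0 : (0 : B) ≤ p := by simp [hp]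
  have hps : IsStrictlyPositive (p : B) := p.isUnit.isStrictlyPositive hp0
  set h : Bˣ := p.cfcRpow (1 / 2) hp0 with hh
  have hhv : (h : B) = (p : B) ^ (1 / 2 : ℝ) := rfl
  have hhh : h * h = p := by
    ext
    rw [Units.val_mul, hhv, ← CFC.rpow_add p.isUnit]
    norm_num [CFC.rpow_one (p : B) hp0]
  have hsh : star h = h := by
    ext
    rw [Units.coe_star, hhv]
    exact (IsSelfAdjoint.of_nonneg CFC.rpow_nonneg).star_eq
  set u : Bˣ := m * h⁻¹ with hu
  have hm : m = u * h := by simp [hu]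
  have huu : star u * u = 1 := by
    have : star u * u = h⁻¹ * (star m * m) * h⁻¹ := by
      simp [hu, star_mul, star_inv, hsh, mul_assoc]
    rw [this, ← hp, ← hhh]; group
  have hsu : star u = u⁻¹ := eq_inv_of_mul_eq_one_left huu
  have huni : (u : B) ∈ unitary B := by
    rw [Unitary.mem_iff]
    constructor
    · exact congrArg Units.val huu
    · have : u * star u = 1 := by rw [hsu]; simp
      exact congrArg Units.val this
  have e1 : (((star m)⁻¹ * m⁻¹ : Bˣ) : B) = (u : B) * ((p⁻¹ : Bˣ) : B) * star (u : B) := by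
    have : (star m)⁻¹ * m⁻¹ = u * p⁻¹ * star u := by
      rw [hm, ← hhh, star_mul, hsh, hsu]; group
    rw [this]; simp
  have hpinv : IsStrictlyPositive ((p⁻¹ : Bˣ) : B) := by
    rw [← CFC.rpow_neg_one_eq_inv p hp0]
    exact IsStrictlyPositive.rpow _ _ hps
  have e2 := unitary_conj_rpow ⟨(u : B), huni⟩ hpinv (1 - t)
  simp only at e2
  rw [e1, e2, ← CFC.rpow_neg p _ hp0]
  have e3 : star (m : B) = (h : B) * star (u : B) := by
    rw [← Units.coe_star, hm, star_mul, hsh]; simp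
  have e4 : (m : B) = u * h := by rw [hm]; simp
  have huu' : star (u : B) * u = 1 := by exact congrArg Units.val huu
  have e5 : star (m : B) * m = (p : B) := by simp [hp]
  rw [e5, e3, e4]
  calc (h : B) * star (u : B) * (u * (p : B) ^ (-(1 - t)) * star (u : B)) * (u * h)
      = h * (star (u : B) * u) * (p : B) ^ (-(1 - t)) * (star (u : B) * u) * h := by noncomm_ring
    _ = (p : B) ^ (1 / 2 : ℝ) * (p : B) ^ (-(1 - t)) * (p : B) ^ (1 / 2 : ℝ) := by
      rw [huu', hhv]; simp
    _ = (p : B) ^ t := by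
      rw [← CFC.rpow_add p.isUnit, ← CFC.rpow_add p.isUnit]
      congr 1; ring

/-- The weighted geometric mean `x #_t a` in a unital C⋆-algebra, with powers given by the
continuous functional calculus. It is meaningful for strictly positive `x` and `a`. -/
noncomputable def gm (x a : B) (t : ℝ) : B :=
  x ^ (1 / 2 : ℝ) * (x ^ (-(1 / 2) : ℝ) * a * x ^ (-(1 / 2) : ℝ)) ^ t * x ^ (1 / 2 : ℝ)

/-- Exchanging the arguments of the geometric mean replaces the weight `t` by `1 - t`. This turns
monotonicity in the first argument into operator monotonicity of a power. It is
`conj_rpow_one_sub` for `m = a^(1/2) x^(-1/2)`. -/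
lemma gm_symm {x a : B} (hx : IsStrictlyPositive x) (ha : IsStrictlyPositive a) (t : ℝ) :
    gm x a t = gm a x (1 - t) := by
  obtain ⟨x, rfl⟩ := hx.isUnit
  obtain ⟨a, rfl⟩ := ha.isUnit
  set s : Bˣ := x.cfcRpow (1 / 2) hx.nonneg with hs
  set r : Bˣ := a.cfcRpow (1 / 2) ha.nonneg with hr
  have hsv : (s : B) = (x : B) ^ (1 / 2 : ℝ) := rfl
  have hrv : (r : B) = (a : B) ^ (1 / 2 : ℝ) := rfl
  have hsv' : ((s⁻¹ : Bˣ) : B) = (x : B) ^ (-(1 / 2) : ℝ) := rfl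
  have hrv' : ((r⁻¹ : Bˣ) : B) = (a : B) ^ (-(1 / 2) : ℝ) := rfl
  have hss : s * s = x := by
    ext
    rw [Units.val_mul, hsv, ← CFC.rpow_add x.isUnit]
    norm_num [CFC.rpow_one (x : B) hx.nonneg]
  have hrr : r * r = a := by
    ext
    rw [Units.val_mul, hrv, ← CFC.rpow_add a.isUnit]
    norm_num [CFC.rpow_one (a : B) ha.nonneg]
  have hsS : star s = s := by
    ext
    rw [Units.coe_star, hsv]
    exact (IsSelfAdjoint.of_nonneg CFC.rpow_nonneg).star_eq
  have hrS : star r = r := by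
    ext
    rw [Units.coe_star, hrv]
    exact (IsSelfAdjoint.of_nonneg CFC.rpow_nonneg).star_eq
  have key := conj_rpow_one_sub (r * s⁻¹) t
  have e1 : (star (r * s⁻¹))⁻¹ * (r * s⁻¹)⁻¹ = r⁻¹ * x * r⁻¹ := by
    rw [star_mul, star_inv, hsS, hrS, ← hss]; group
  have e2 : star (r * s⁻¹) * (r * s⁻¹) = s⁻¹ * a * s⁻¹ := by
    rw [star_mul, star_inv, hsS, hrS, ← hrr]; group
  have e2' : star ((r * s⁻¹ : Bˣ) : B) * ((r * s⁻¹ : Bˣ) : B) = s⁻¹.val * a * s⁻¹.val := by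
    exact congrArg Units.val e2
  have e3 : star ((r * s⁻¹ : Bˣ) : B) = s⁻¹.val * r := by
    rw [← Units.coe_star, star_mul, star_inv, hsS, hrS]; simp
  rw [e1, e2', e3] at key
  rw [gm, gm, ← hsv, ← hsv', ← hrv, ← hrv', ← key]
  simp [mul_assoc]

/-- Monotonicity in the second argument, by the Löwner–Heinz inequality. -/
lemma gm_le_gm {a x y : B} {s : ℝ} (hs : s ∈ Set.Icc (0 : ℝ) 1) (hxy : x ≤ y) :
    gm a x s ≤ gm a y s := by
  have h1 : IsSelfAdjoint (a ^ (1 / 2 : ℝ)) := .of_nonneg CFC.rpow_nonneg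
  have h2 : IsSelfAdjoint (a ^ (-(1 / 2) : ℝ)) := .of_nonneg CFC.rpow_nonneg
  exact h1.conjugate_le_conjugate (CFC.rpow_le_rpow hs (h2.conjugate_le_conjugate hxy))

lemma smul_rpow_of_pos {c : ℝ} (hc : 0 < c) {x : B} (hx : IsStrictlyPositive x) (s : ℝ) :
    (c • x) ^ s = c ^ s • x ^ s := by
  have hx0 := hx.nonneg
  have hcont : ContinuousOn (fun r : ℝ => r ^ s) (spectrum ℝ x) := by
    refine ContinuousOn.rpow_const continuousOn_id fun r hr => Or.inl ?_
    rintro rfl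
    exact spectrum.zero_notMem ℝ hx.isUnit hr
  have h := CFC.cfc_rpow (a := x) (y := s) (f := fun r => c * r) (fun r hr => by
    have := (StarOrderedRing.isStrictlyPositive_iff_spectrum_pos (R := ℝ) x).1 hx r hr
    positivity)
  rw [cfc_const_mul_id c x] at h
  rw [h, CFC.rpow_eq_cfc_real hx0, ← cfc_const_mul _ _ _ hcont]
  refine cfc_congr fun r hr => ?_
  have := (StarOrderedRing.isStrictlyPositive_iff_spectrum_pos (R := ℝ) x).1 hx r hr
  exact Real.mul_rpow hc.le this.le

lemma isStrictlyPositive_rpow_conj {a x : B} (ha : IsStrictlyPositive a) (hx : IsStrictlyPositive x)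
    (r : ℝ) : IsStrictlyPositive (a ^ r * x * a ^ r) := by
  have h := (IsStrictlyPositive.rpow a r ha)
  exact (h.isUnit.isStrictlyPositive_iff_conjugate_of_isSelfAdjoint x _ h.nonneg.isSelfAdjoint).2 hx

lemma isStrictlyPositive_gm {a x : B} (ha : IsStrictlyPositive a) (hx : IsStrictlyPositive x) (s : ℝ) :
    IsStrictlyPositive (gm a x s) :=
  isStrictlyPositive_rpow_conj ha (.rpow _ s (isStrictlyPositive_rpow_conj ha hx _)) _

lemma gm_smul {c : ℝ} (hc : 0 < c) {a x : B} (ha : IsStrictlyPositive a)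
    (hx : IsStrictlyPositive x) (s : ℝ) : gm a (c • x) s = c ^ s • gm a x s := by
  rw [gm, gm, mul_smul_comm, smul_mul_assoc,
    smul_rpow_of_pos hc (isStrictlyPositive_rpow_conj ha hx _), mul_smul_comm, smul_mul_assoc]

/-- Any two strictly positive elements are comparable up to a scalar; that is, their Thompson
distance is finite. -/
lemma exists_le_smul {x y : B} (hx : IsStrictlyPositive x) (hy : IsStrictlyPositive y) :
    ∃ c : ℝ, 1 ≤ c ∧ x ≤ c • y := by
  set z := y ^ (-(1 / 2) : ℝ) * x * y ^ (-(1 / 2) : ℝ) with hz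
  have hz0 : IsSelfAdjoint z := (isStrictlyPositive_rpow_conj hy hx _).nonneg.isSelfAdjoint
  have h1 : z ≤ (‖z‖ + 1) • (1 : B) := by
    refine hz0.le_algebraMap_norm_self.trans ?_
    rw [Algebra.algebraMap_eq_smul_one]
    exact smul_le_smul_of_nonneg_right (by linarith) zero_le_one
  refine ⟨‖z‖ + 1, by linarith [norm_nonneg z], ?_⟩
  have hs : IsSelfAdjoint (y ^ (1 / 2 : ℝ)) := .of_nonneg CFC.rpow_nonneg
  have h2 := hs.conjugate_le_conjugate h1
  have e : y ^ (1 / 2 : ℝ) * z * y ^ (1 / 2 : ℝ) = x := by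
    calc _ = (y ^ (1 / 2 : ℝ) * y ^ (-(1 / 2) : ℝ)) * x * (y ^ (-(1 / 2) : ℝ) * y ^ (1 / 2 : ℝ)) := by
          simp only [hz, mul_assoc]
      _ = x := by rw [CFC.rpow_mul_rpow_neg _ hy, CFC.rpow_neg_mul_rpow _ hy]; simp
  rw [e, mul_smul_comm, smul_mul_assoc, mul_one, ← CFC.rpow_add hy.isUnit] at h2
  norm_num [CFC.rpow_one y hy.nonneg] at h2
  exact h2


/-! ### Monotone maps homogeneous of degree less than one -/

lemma le_of_forall_le_rpow_smul {x y : B} {c s : ℝ} (hc : 0 < c) (hs : s ∈ Set.Ico (0 : ℝ) 1)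
    (h : ∀ k : ℕ, x ≤ c ^ (s ^ k) • y) : x ≤ y := by
  have h1 : Filter.Tendsto (fun k : ℕ => c ^ (s ^ k)) Filter.atTop (nhds 1) := by
    have := (Real.continuousAt_const_rpow hc.ne' (b := 0)).tendsto.comp
      (tendsto_pow_atTop_nhds_zero_of_lt_one hs.1 hs.2)
    simpa [Function.comp_def] using this
  have h2 : Filter.Tendsto (fun k : ℕ => c ^ (s ^ k) • y) Filter.atTop (nhds y) := by
    simpa using h1.smul_const y
  exact ge_of_tendsto' h2 h

/-- A monotone map homogeneous of degree `s` contracts Thompson's metric by the factor `s`: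
if `x ≤ c y`, then `f^k x ≤ c^(s^k) f^k y`. -/
lemma iterate_le_rpow_smul {f : B → B} {s : ℝ}
    (hpos : ∀ x, IsStrictlyPositive x → IsStrictlyPositive (f x))
    (hmono : ∀ x y, IsStrictlyPositive x → IsStrictlyPositive y → x ≤ y → f x ≤ f y)
    (hhom : ∀ (c : ℝ) x, 0 < c → IsStrictlyPositive x → f (c • x) = c ^ s • f x)
    {x y : B} (hx : IsStrictlyPositive x) (hy : IsStrictlyPositive y) {c : ℝ} (hc : 0 < c)
    (h : x ≤ c • y) (k : ℕ) :
    IsStrictlyPositive (f^[k] x) ∧ IsStrictlyPositive (f^[k] y) ∧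
      f^[k] x ≤ c ^ (s ^ k) • f^[k] y := by
  induction k with
  | zero => simpa using ⟨hx, hy, h⟩
  | succ k ih =>
    obtain ⟨h1, h2, h3⟩ := ih
    have hck : 0 < c ^ (s ^ k) := Real.rpow_pos_of_pos hc _
    simp only [Function.iterate_succ_apply']
    refine ⟨hpos _ h1, hpos _ h2, ?_⟩
    have := hmono _ _ h1 (h1.of_le h3) h3
    rwa [hhom _ _ hck h2, ← Real.rpow_mul hc.le, ← pow_succ] at this

/-- Since `x` and `y` play symmetric roles, this shows that a monotone map homogeneous of degree
`s < 1` has at most one fixed point. -/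
lemma le_of_fixed {f : B → B} {s : ℝ} (hs : s ∈ Set.Ico (0 : ℝ) 1)
    (hpos : ∀ x, IsStrictlyPositive x → IsStrictlyPositive (f x))
    (hmono : ∀ x y, IsStrictlyPositive x → IsStrictlyPositive y → x ≤ y → f x ≤ f y)
    (hhom : ∀ (c : ℝ) x, 0 < c → IsStrictlyPositive x → f (c • x) = c ^ s • f x)
    {x y : B} (hx : IsStrictlyPositive x) (hy : IsStrictlyPositive y) (hfx : f x = x)
    (hfy : f y = y) : x ≤ y := by
  obtain ⟨c, hc, h⟩ := exists_le_smul hx hy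
  have hc0 : 0 < c := by linarith
  refine le_of_forall_le_rpow_smul hc0 hs fun k => ?_
  have := (iterate_le_rpow_smul hpos hmono hhom hx hy hc0 h k).2.2
  rwa [Function.iterate_fixed hfx, Function.iterate_fixed hfy] at this

/-- Existence of a fixed point. The iterates of a suitable order interval `[k⁻¹ 1, k 1]` form
nested compact order intervals whose endpoints have Thompson distance tending to `0`; a common
point `z` and its image `f z` lie in all of them, hence agree. No continuity of `f` is needed. -/
lemma exists_fixed [ProperSpace B] {f : B → B} {s : ℝ} (hs : s ∈ Set.Ico (0 : ℝ) 1)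
    (hpos : ∀ x, IsStrictlyPositive x → IsStrictlyPositive (f x))
    (hmono : ∀ x y, IsStrictlyPositive x → IsStrictlyPositive y → x ≤ y → f x ≤ f y)
    (hhom : ∀ (c : ℝ) x, 0 < c → IsStrictlyPositive x → f (c • x) = c ^ s • f x) :
    ∃ x, IsStrictlyPositive x ∧ f x = x := by
  have h1 : IsStrictlyPositive (1 : B) := isStrictlyPositive_one
  obtain ⟨c₁, hc₁, hl⟩ := exists_le_smul h1 (hpos 1 h1)
  obtain ⟨c₂, hc₂, hu⟩ := exists_le_smul (hpos 1 h1) h1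
  obtain ⟨c, hc, hl, hu⟩ : ∃ c : ℝ, 1 ≤ c ∧ (1 : B) ≤ c • f 1 ∧ f 1 ≤ c • (1 : B) :=
    ⟨max c₁ c₂, hc₁.trans (le_max_left _ _),
      hl.trans (smul_le_smul_of_nonneg_right (le_max_left _ _) (hpos 1 h1).nonneg),
      hu.trans (smul_le_smul_of_nonneg_right (le_max_right _ _) h1.nonneg)⟩
  have hs1 : 0 < 1 - s := by linarith [hs.2]
  obtain ⟨k, hk, hkc⟩ : ∃ k : ℝ, 1 ≤ k ∧ k ^ (1 - s) = c :=
    ⟨c ^ (1 - s)⁻¹, Real.one_le_rpow hc (by positivity),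
      Real.rpow_inv_rpow (by linarith) hs1.ne'⟩
  have hk0 : 0 < k := by linarith
  -- The choice `k = c^(1/(1-s))` is what makes `f` map `[k⁻¹ 1, k 1]` into itself.
  have hkk : k ^ s * c = k := by
    rw [← hkc, ← Real.rpow_add hk0]; simp
  set l : B := k⁻¹ • (1 : B) with hldef
  set u : B := k • (1 : B) with hudef
  have hlpos : IsStrictlyPositive l := h1.smul (by positivity)
  have hupos : IsStrictlyPositive u := h1.smul hk0
  have hlf : l ≤ f l := by
    rw [hldef, hhom _ _ (by positivity) h1]
    have := smul_le_smul_of_nonneg_left hl (inv_nonneg.2 hk0.le)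
    have e : k⁻¹ * c = k⁻¹ ^ s := by
      rw [Real.inv_rpow hk0.le, inv_mul_eq_iff_eq_mul₀ hk0.ne', ← div_eq_mul_inv,
        eq_div_iff (Real.rpow_pos_of_pos hk0 s).ne', mul_comm, hkk]
    rwa [smul_smul, e] at this
  have hfu : f u ≤ u := by
    rw [hudef, hhom _ _ hk0 h1]
    have := smul_le_smul_of_nonneg_left hu (Real.rpow_nonneg hk0.le s)
    rwa [smul_smul, hkk] at this
  have hlu : l ≤ u := by
    refine smul_le_smul_of_nonneg_right ?_ h1.nonneg
    exact (inv_le_one_of_one_le₀ hk).trans hk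
  have hul : u ≤ (k * k) • l := by
    rw [hldef, smul_smul, mul_assoc, mul_inv_cancel₀ hk0.ne', mul_one]
  have hC : 0 < k * k := by positivity
  have hiter := iterate_le_rpow_smul hpos hmono hhom hupos hlpos hC hul
  have hlow : ∀ n, f^[n] l ≤ f^[n + 1] l := by
    intro n
    induction n with
    | zero => simpa using hlf
    | succ n ih =>
      have := hmono _ _ (hiter n).2.1 (hiter (n + 1)).2.1 ih
      rwa [← Function.iterate_succ_apply' f, ← Function.iterate_succ_apply' f] at this
  have hupp : ∀ n, f^[n + 1] u ≤ f^[n] u := by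
    intro n
    induction n with
    | zero => simpa using hfu
    | succ n ih =>
      have := hmono _ _ (hiter (n + 1)).1 (hiter n).1 ih
      rwa [← Function.iterate_succ_apply' f, ← Function.iterate_succ_apply' f] at this
  have hlun : ∀ n, f^[n] l ≤ f^[n] u := by
    intro n
    induction n with
    | zero => simpa using hlu
    | succ n ih =>
      simp only [Function.iterate_succ_apply']
      exact hmono _ _ (hiter n).2.1 (hiter n).1 ih
  obtain ⟨z, hz⟩ : (⋂ n, Set.Icc (f^[n] l) (f^[n] u)).Nonempty := by
    refine IsCompact.nonempty_iInter_of_sequence_nonempty_isCompact_isClosed _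
      (fun n => Set.Icc_subset_Icc (hlow n) (hupp n)) (fun n => Set.nonempty_Icc.2 (hlun n))
      ?_ (fun n => isClosed_Icc)
    refine Metric.isCompact_of_isClosed_isBounded isClosed_Icc ?_
    refine (Metric.isBounded_closedBall (x := (0 : B)) (r := ‖f^[0] u‖)).subset fun x hx => ?_
    rw [mem_closedBall_zero_iff]
    exact CStarAlgebra.norm_le_norm_of_nonneg_of_le (hlpos.nonneg.trans hx.1) hx.2
  rw [Set.mem_iInter] at hz
  have hzpos : IsStrictlyPositive z := hlpos.of_le (hz 0).1
  have hfz : ∀ n, f z ∈ Set.Icc (f^[n] l) (f^[n] u) := by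
    intro n
    refine ⟨(hlow n).trans ?_, le_trans ?_ (hupp n)⟩ <;> rw [Function.iterate_succ_apply']
    · exact hmono _ _ (hiter n).2.1 hzpos (hz n).1
    · exact hmono _ _ hzpos (hiter n).1 (hz n).2
  refine ⟨z, hzpos, le_antisymm ?_ ?_⟩ <;> refine le_of_forall_le_rpow_smul hC hs fun n => ?_
  · exact (hfz n).2.trans ((hiter n).2.2.trans
      (smul_le_smul_of_nonneg_left (hz n).1 (Real.rpow_nonneg hC.le _)))
  · exact (hz n).2.trans ((hiter n).2.2.trans
      (smul_le_smul_of_nonneg_left (hfz n).1 (Real.rpow_nonneg hC.le _)))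

end CStar

/-! ### Positive definite matrices -/

section Matrices
open scoped MatrixOrder Matrix.Norms.L2Operator

variable {m : ℕ}

lemma matFun_eq_cfc (f : ℝ → ℝ) {A : Matrix (Fin m) (Fin m) ℂ} (hA : A.IsHermitian) :
    matFun f A = cfc f A := by
  rw [matFun, dif_pos hA, hA.cfc_eq, Matrix.IsHermitian.cfc, Unitary.conjStarAlgAut_apply]
  rfl

lemma mpow_eq_rpow {A : Matrix (Fin m) (Fin m) ℂ} (hA : IsStrictlyPositive A) (t : ℝ) :
    mpow A t = A ^ t := by
  rw [mpow, matFun_eq_cfc _ hA.nonneg.isSelfAdjoint, CFC.rpow_eq_cfc_real hA.nonneg]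

lemma msqrt_eq_rpow {A : Matrix (Fin m) (Fin m) ℂ} (hA : IsStrictlyPositive A) :
    msqrt A = A ^ (1 / 2 : ℝ) := by
  rw [← mpow_eq_rpow hA, msqrt, mpow]
  simp only [← Real.sqrt_eq_rpow]

lemma wgmean_eq_gm {X A : Matrix (Fin m) (Fin m) ℂ} (hX : IsStrictlyPositive X)
    (hA : IsStrictlyPositive A) (t : ℝ) : wgmean X A t = gm X A t := by
  have hinv : (msqrt X)⁻¹ = X ^ (-(1 / 2) : ℝ) := by
    rw [msqrt_eq_rpow hX]
    exact Matrix.inv_eq_right_inv (CFC.rpow_mul_rpow_neg _ hX)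
  rw [wgmean, gm, hinv, mpow_eq_rpow (isStrictlyPositive_rpow_conj hX hA _), msqrt_eq_rpow hX]

/-- The fixed-point problem with `X #_t Aᵢ` written as `Aᵢ #_{1-t} X`. -/
lemma existsUnique_fixed_gm {n : ℕ} (A : Fin n → Matrix (Fin m) (Fin m) ℂ)
    (hA : ∀ i, IsStrictlyPositive (A i)) (w : Fin n → ℝ) (hw : ∀ i, 0 < w i)
    (hn : Nonempty (Fin n)) (s : ℝ) (hs : s ∈ Set.Ico (0 : ℝ) 1) :
    ∃! X : Matrix (Fin m) (Fin m) ℂ, IsStrictlyPositive X ∧ ∑ i, w i • gm (A i) X s = X := by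
  have : ProperSpace (Matrix (Fin m) (Fin m) ℂ) := FiniteDimensional.proper ℂ _
  set f : Matrix (Fin m) (Fin m) ℂ → Matrix (Fin m) (Fin m) ℂ :=
    fun X => ∑ i, w i • gm (A i) X s with hf
  have hpos : ∀ X, IsStrictlyPositive X → IsStrictlyPositive (f X) := by
    intro X hX
    obtain ⟨i⟩ := hn
    have h : ∀ j, IsStrictlyPositive (w j • gm (A j) X s) := fun j =>
      (isStrictlyPositive_gm (hA j) hX s).smul (hw j)
    exact (h i).of_le (Finset.single_le_sum (f := fun j => w j • gm (A j) X s)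
      (fun j _ => (h j).nonneg) (Finset.mem_univ i))
  have hmono : ∀ X Y, IsStrictlyPositive X → IsStrictlyPositive Y → X ≤ Y → f X ≤ f Y := by
    intro X Y _ _ hXY
    exact Finset.sum_le_sum fun i _ =>
      smul_le_smul_of_nonneg_left (gm_le_gm ⟨hs.1, hs.2.le⟩ hXY) (hw i).le
  have hhom : ∀ (c : ℝ) X, 0 < c → IsStrictlyPositive X → f (c • X) = c ^ s • f X := by
    intro c X hc hX
    simp only [hf, Finset.smul_sum]
    refine Finset.sum_congr rfl fun i _ => ?_
    rw [gm_smul hc (hA i) hX, smul_comm]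
  obtain ⟨X, hX, hfX⟩ := exists_fixed hs hpos hmono hhom
  refine ⟨X, ⟨hX, hfX⟩, fun Y ⟨hY, hfY⟩ => le_antisymm ?_ ?_⟩
  · exact le_of_fixed hs hpos hmono hhom hY hX hfY hfX
  · exact le_of_fixed hs hpos hmono hhom hX hY hfX hfY

end Matrices

/-- Power means: for each `t ∈ (0,1]`, the equation `X = Σᵢ wᵢ (X #_t Aᵢ)` has a unique
positive definite solution (the `t`-weighted power mean). -/
theorem power_mean_exists_unique {m n : ℕ} (A : Fin n → Matrix (Fin m) (Fin m) ℂ)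
    (hA : ∀ i, (A i).PosDef) (w : Fin n → ℝ) (hw : ∀ i, 0 < w i) (hw1 : ∑ i, w i = 1)
    (t : ℝ) (ht : t ∈ Set.Ioc (0 : ℝ) 1) :
    ∃! X : Matrix (Fin m) (Fin m) ℂ, X.PosDef ∧ X = ∑ i, w i • wgmean X (A i) t := by
  open scoped MatrixOrder Matrix.Norms.L2Operator in
  have hA' : ∀ i, IsStrictlyPositive (A i) := fun i =>
    Matrix.isStrictlyPositive_iff_posDef.2 (hA i)
  have hn : Nonempty (Fin n) := by
    by_contra h
    rw [not_nonempty_iff] at h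
    simp at hw1
  have key := existsUnique_fixed_gm A hA' w hw hn (1 - t) ⟨by linarith [ht.2], by linarith [ht.1]⟩
  refine (existsUnique_congr fun X => ?_).1 key
  rw [Matrix.isStrictlyPositive_iff_posDef, eq_comm (a := X)]
  refine and_congr_right fun hX => ?_
  rw [← Matrix.isStrictlyPositive_iff_posDef] at hX
  simp_rw [wgmean_eq_gm hX (hA' _), gm_symm hX (hA' _)]
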